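/- Let n ≥ 4 be a composite integer and let ζ_n = exp(2πi/n). Then R(U_n) = ℤ[1/n, ζ_n], the subring of ℂ generated by ζ_n and 1/n. -/

import Mathlib

/-- The antisymmetric bracket `⟨x,y⟩ = x·conj(y) − conj(x)·y`. -/
noncomputable def sbr (x y : ℂ) : ℂ :=
  x * (starRingEnd ℂ) y - (starRingEnd ℂ) x * y

/-- The intersection point `I_{u,v}(p,q)` of the lines `L_u(p)` and `L_v(q)`. -/
noncomputable def Iop (u v p q : ℂ) : ℂ :=
  (sbr u p / sbr u v) * v + (sbr v q / sbr v u) * u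

/-- `origamiPts U` is the smallest subset of `ℂ` containing `0` and `1` that is
closed under `(p,q) ↦ I_{u,v}(p,q)` for all `u, v ∈ U` with `u ≠ ±v`.  This is `R(U)`. -/
inductive origamiPts (U : Set ℂ) : ℂ → Prop
  | zero : origamiPts U 0
  | one : origamiPts U 1
  | inter {u v : ℂ} (hu : u ∈ U) (hv : v ∈ U) (huv : u ≠ v) (huv' : u ≠ -v)
      {p q : ℂ} (hp : origamiPts U p) (hq : origamiPts U q) :
      origamiPts U (Iop u v p q)

/-!
A point `x` lies on `L_u(p)` iff `⟨u,x⟩ = ⟨u,p⟩`, so `I_{u,v}(p,q)` is the solution of two real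
linear conditions, and multiplication by `t ∈ ℝ·d` with `d ∈ U` maps lines with direction in `U` to
such lines. Hence `R(U)` is stable under `x ↦ s + t * x` as soon as it contains `s` and `s + t`. As
`I_{u,v}(p,q)` is the sum of a real multiple of `v` and a real multiple of `u`, namely of
`I_{u,v}(p,0)` and `I_{v,u}(q,0)`, this makes `R(U)` a ring.

In `R(U_n)` all `1 - c` with `c ^ n = 1`, `c ≠ 1` divide `1 - ζ`. If `n = m * k` is a proper
factorization, then `1 - ζ ^ m = (1 - ζ) * ∑ i < m, ζ ^ i` makes the sum a unit, and the sum is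
divisible by `ζ - ζ ^ k`, because `ζ ^ k` is a nontrivial `m`-th root of unity, hence by `1 - ζ`. So
every `1 - c` is a unit, and so is their product `n`.
-/

open scoped ComplexConjugate

section Bracket

variable {u v p q x : ℂ}

lemma sbr_self (x : ℂ) : sbr x x = 0 := by
  rw [sbr, mul_comm, sub_self]

lemma sbr_swap (x y : ℂ) : sbr y x = -sbr x y := by
  simp only [sbr]
  ring

lemma sbr_zero_right (x : ℂ) : sbr x 0 = 0 := by
  simp only [sbr, map_zero, mul_zero, sub_zero]

lemma sbr_add_right (x y z : ℂ) : sbr x (y + z) = sbr x y + sbr x z := by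
  simp only [sbr, map_add]
  ring

lemma sbr_neg_right (x y : ℂ) : sbr x (-y) = -sbr x y := by
  simp only [sbr, map_neg]
  ring

lemma sbr_mul_right_of_conj_eq {r : ℂ} (hr : conj r = r) (x y : ℂ) :
    sbr x (r * y) = r * sbr x y := by
  simp only [sbr, map_mul, hr]
  ring

lemma conj_sbr (x y : ℂ) : conj (sbr x y) = -sbr x y := by
  simp only [sbr, map_sub, map_mul, Complex.conj_conj]
  ring

lemma conj_sbr_div_sbr (w x y z : ℂ) : conj (sbr w x / sbr y z) = sbr w x / sbr y z := by
  rw [map_div₀, conj_sbr, conj_sbr, neg_div_neg_eq]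

lemma left_ne_zero_of_sbr_ne_zero (h : sbr u v ≠ 0) : u ≠ 0 := by
  rintro rfl
  simp [sbr] at h

lemma sbr_swap_ne_zero (h : sbr u v ≠ 0) : sbr v u ≠ 0 := by
  rwa [sbr_swap, neg_ne_zero]

lemma sbr_mul_mul_ne_zero {d : ℂ} (hd : d ≠ 0) (h : sbr u v ≠ 0) : sbr (d * u) (d * v) ≠ 0 := by
  have factor : sbr (d * u) (d * v) = d * conj d * sbr u v := by
    simp only [sbr, map_mul]
    ring
  rw [factor]
  exact mul_ne_zero (mul_ne_zero hd (by simpa using hd)) h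

lemma Iop_swap (u v p q : ℂ) : Iop v u q p = Iop u v p q := add_comm _ _

lemma Iop_eq_add (u v p q : ℂ) : Iop u v p q = Iop u v p 0 + Iop v u q 0 := by
  simp only [Iop, sbr_zero_right, zero_div, zero_mul, add_zero]

lemma sbr_Iop_left (h : sbr u v ≠ 0) (p q : ℂ) : sbr u (Iop u v p q) = sbr u p :=
  calc sbr u (Iop u v p q)
      = sbr u p / sbr u v * sbr u v + sbr v q / sbr v u * sbr u u := by
        rw [Iop, sbr_add_right, sbr_mul_right_of_conj_eq (conj_sbr_div_sbr ..),
          sbr_mul_right_of_conj_eq (conj_sbr_div_sbr ..)]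
    _ = sbr u p := by rw [sbr_self, mul_zero, add_zero, div_mul_cancel₀ _ h]

lemma sbr_Iop_right (h : sbr u v ≠ 0) (p q : ℂ) : sbr v (Iop u v p q) = sbr v q := by
  rw [← Iop_swap, sbr_Iop_left (sbr_swap_ne_zero h)]

lemma Iop_eq_of_sbr_eq (h : sbr u v ≠ 0) (hp : sbr u x = sbr u p) (hq : sbr v x = sbr v q) :
    Iop u v p q = x := by
  have expand : sbr u v * x = sbr u x * v - sbr v x * u := by
    simp only [sbr]
    ring
  rw [Iop, ← hp, ← hq, sbr_swap u v]
  field_simp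
  linear_combination -expand

lemma div_conj_sub_div_conj (hu : u ≠ 0) (hv : v ≠ 0) :
    u / conj u - v / conj v = sbr u v / (conj u * conj v) := by
  rw [div_sub_div _ _ (by simpa using hu) (by simpa using hv), sbr]

-- `u / conj u` determines the line `ℝ·u`, so `Iop u v` is a function of these two ratios alone.
lemma Iop_eq_div_conj (h : sbr u v ≠ 0) (p q : ℂ) :
    Iop u v p q =
      ((u / conj u * conj p - p) * (v / conj v) - (v / conj v * conj q - q) * (u / conj u)) *
        (u / conj u - v / conj v)⁻¹ := by
  have hu := left_ne_zero_of_sbr_ne_zero h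
  have hv := left_ne_zero_of_sbr_ne_zero (sbr_swap_ne_zero h)
  have hu' : conj u ≠ 0 := by simpa using hu
  have hv' : conj v ≠ 0 := by simpa using hv
  rw [div_conj_sub_div_conj hu hv, Iop, sbr_swap u v]
  generalize sbr u v = s at h
  simp only [sbr]
  field_simp
  ring

end Bracket

namespace origamiPts

lemma of_sbr_eq {U : Set ℂ} {u v p q x : ℂ} (hu : u ∈ U) (hv : v ∈ U) (huv : sbr u v ≠ 0)
    (hp : origamiPts U p) (hq : origamiPts U q) (hxp : sbr u x = sbr u p)
    (hxq : sbr v x = sbr v q) : origamiPts U x := by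
  rw [← Iop_eq_of_sbr_eq huv hxp hxq]
  refine inter hu hv ?_ ?_ hp hq <;> rintro rfl <;> refine huv ?_
  · exact sbr_self _
  · rw [sbr_swap, sbr_neg_right, sbr_self, neg_zero, neg_zero]

lemma induction_of_sbr_ne_zero {U : Set ℂ} {P : ℂ → Prop} (zero : P 0) (one : P 1)
    (inter : ∀ u ∈ U, ∀ v ∈ U, sbr u v ≠ 0 → ∀ p q, origamiPts U p → origamiPts U q →
      P p → P q → P (Iop u v p q)) {x : ℂ} (hx : origamiPts U x) : P x := by
  induction hx with
  | zero => exact zero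
  | one => exact one
  | @inter u v hu hv _ _ p q hp hq ihp ihq =>
    by_cases huv : sbr u v = 0
    -- Division by zero turns the intersection of parallel lines into the point `0`.
    · simpa only [Iop, sbr_swap u v, huv, neg_zero, div_zero, zero_mul, add_zero] using zero
    · exact inter u hu v hv huv p q hp hq ihp ihq

theorem mem_subring {U : Set ℂ} {S : Subring ℂ} (hconj : ∀ x ∈ S, conj x ∈ S)
    (hU : ∀ u ∈ U, u / conj u ∈ S)
    (hinv : ∀ u ∈ U, ∀ v ∈ U, (u / conj u - v / conj v)⁻¹ ∈ S) {x : ℂ} (hx : origamiPts U x) :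
    x ∈ S := by
  refine induction_of_sbr_ne_zero S.zero_mem S.one_mem ?_ hx
  intro u hu v hv huv p q _ _ hp hq
  have half_mem {w r : ℂ} (hw : w ∈ U) (hr : r ∈ S) : w / conj w * conj r - r ∈ S :=
    S.sub_mem (S.mul_mem (hU w hw) (hconj r hr)) hr
  rw [Iop_eq_div_conj huv]
  exact S.mul_mem (S.sub_mem (S.mul_mem (half_mem hu hp) (hU v hv))
    (S.mul_mem (half_mem hv hq) (hU u hu))) (hinv u hu v hv)

variable {U : Submonoid ℂ} {d s t u w x y : ℂ}

lemma add_mul_of_sbr_eq_zero (hd : d ∈ U) (hd0 : d ≠ 0) (hdt : sbr d t = 0) (hs : origamiPts U s)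
    (hst : origamiPts U (s + t)) (hx : origamiPts U x) : origamiPts U (s + t * x) := by
  have map_line {a y r : ℂ} (h : sbr a y = sbr a r) :
      sbr (d * a) (s + t * y) = sbr (d * a) (s + t * r) := by
    simp only [sbr, map_add, map_mul] at h hdt ⊢
    linear_combination a * (conj y - conj r) * hdt + conj d * t * h
  refine induction_of_sbr_ne_zero (P := fun x => origamiPts U (s + t * x))
    (by simpa using hs) (by simpa using hst) ?_ hx
  intro u hu v hv huv p q _ _ hp hq
  exact of_sbr_eq (U.mul_mem hd hu) (U.mul_mem hd hv) (sbr_mul_mul_ne_zero hd0 huv) hp hq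
    (map_line (sbr_Iop_left huv p q)) (map_line (sbr_Iop_right huv p q))

lemma mul_of_sbr_eq_zero (hd : d ∈ U) (hd0 : d ≠ 0) (hdt : sbr d t = 0) (ht : origamiPts U t)
    (hx : origamiPts U x) : origamiPts U (t * x) := by
  simpa using add_mul_of_sbr_eq_zero hd hd0 hdt zero (by simpa using ht) hx

lemma sbr_one_ne_zero_of_sq (h : sbr 1 (u ^ 2) ≠ 0) : sbr 1 u ≠ 0 := by
  have factor : sbr 1 (u ^ 2) = (conj u + u) * sbr 1 u := by
    simp only [sbr, map_pow, map_one]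
    ring
  exact right_ne_zero_of_mul (factor ▸ h)

lemma sbr_one_add_div_conj (hu0 : u ≠ 0) : sbr u (1 + u / conj u) = 0 := by
  have : conj u ≠ 0 := by simpa using hu0
  simp only [sbr, map_add, map_one, map_div₀, Complex.conj_conj]
  field_simp
  ring

lemma sbr_sq_div_conj (hu0 : u ≠ 0) : sbr (u ^ 2) (u / conj u) = 0 := by
  have : conj u ≠ 0 := by simpa using hu0
  simp only [sbr, map_pow, map_div₀, Complex.conj_conj]
  field_simp
  ring

lemma div_conj (hu : u ∈ U) (h : sbr 1 (u ^ 2) ≠ 0) : origamiPts U (u / conj u) := by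
  have h1 := sbr_one_ne_zero_of_sq h
  have hu0 := left_ne_zero_of_sbr_ne_zero (sbr_swap_ne_zero h1)
  have hu_sq : sbr u (u ^ 2) ≠ 0 := by
    simpa only [mul_one, ← sq] using sbr_mul_mul_ne_zero hu0 h1
  have one_add : origamiPts U (1 + u / conj u) :=
    of_sbr_eq hu (pow_mem hu 2) hu_sq zero one
      (by rw [sbr_one_add_div_conj hu0, sbr_zero_right])
      (by rw [sbr_add_right, sbr_sq_div_conj hu0, add_zero])
  exact of_sbr_eq U.one_mem (pow_mem hu 2) h one_add zero
    (by rw [sbr_add_right, sbr_self, zero_add])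
    (by rw [sbr_sq_div_conj hu0, sbr_zero_right])

lemma neg_one (hu : u ∈ U) (h : sbr 1 (u ^ 2) ≠ 0) : origamiPts U (-1) := by
  have hu1 := sbr_swap_ne_zero (sbr_one_ne_zero_of_sq h)
  refine of_sbr_eq hu U.one_mem hu1 (div_conj hu h) zero ?_ ?_
  · have sum_zero := sbr_one_add_div_conj (left_ne_zero_of_sbr_ne_zero hu1)
    rw [sbr_add_right] at sum_zero
    rw [sbr_neg_right]
    linear_combination -sum_zero
  · rw [sbr_neg_right, sbr_self, neg_zero, sbr_zero_right]

lemma neg (hu : u ∈ U) (h : sbr 1 (u ^ 2) ≠ 0) (hx : origamiPts U x) : origamiPts U (-x) := by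
  simpa using mul_of_sbr_eq_zero U.one_mem one_ne_zero
    (by rw [sbr_neg_right, sbr_self, neg_zero]) (neg_one hu h) hx

lemma one_add_one (hu : u ∈ U) (h : sbr 1 (u ^ 2) ≠ 0) : origamiPts U (1 + 1) := by
  have hu1 := sbr_swap_ne_zero (sbr_one_ne_zero_of_sq h)
  have hu0 := left_ne_zero_of_sbr_ne_zero hu1
  have one_sub : origamiPts U (1 + -(u / conj u)) :=
    of_sbr_eq (pow_mem hu 2) U.one_mem (sbr_swap_ne_zero h) one (neg hu h (div_conj hu h))
      (by rw [sbr_add_right, sbr_neg_right, sbr_sq_div_conj hu0, neg_zero, add_zero])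
      (by rw [sbr_add_right, sbr_self, zero_add])
  refine of_sbr_eq hu U.one_mem hu1 one_sub zero ?_ ?_
  · have sum_zero := sbr_one_add_div_conj hu0
    rw [sbr_add_right] at sum_zero
    rw [sbr_add_right, sbr_add_right, sbr_neg_right]
    linear_combination sum_zero
  · rw [sbr_add_right, sbr_self, sbr_zero_right, add_zero]

lemma add (hu : u ∈ U) (h : sbr 1 (u ^ 2) ≠ 0) (hx : origamiPts U x) (hy : origamiPts U y) :
    origamiPts U (x + y) := by
  have add_of_add_one {s r : ℂ} (hs : origamiPts U s) (hs1 : origamiPts U (s + 1))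
      (hr : origamiPts U r) : origamiPts U (s + r) := by
    simpa using add_mul_of_sbr_eq_zero U.one_mem one_ne_zero (sbr_self 1) hs hs1 hr
  have hx1 : origamiPts U (x + 1) :=
    add_comm 1 x ▸ add_of_add_one one (one_add_one hu h) hx
  exact add_of_add_one hx hx1 hy

lemma mul (hu : u ∈ U) (h : sbr 1 (u ^ 2) ≠ 0) (hx : origamiPts U x) (hy : origamiPts U y) :
    origamiPts U (x * y) := by
  have project_mul {v w p : ℂ} (hv : v ∈ U) (hw : w ∈ U) (hvw : sbr v w ≠ 0)
      (hp : origamiPts U p) : origamiPts U (Iop v w p 0 * y) := by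
    have on_line : sbr w (Iop v w p 0) = 0 := by rw [sbr_Iop_right hvw, sbr_zero_right]
    refine mul_of_sbr_eq_zero hw (left_ne_zero_of_sbr_ne_zero (sbr_swap_ne_zero hvw)) on_line ?_ hy
    exact of_sbr_eq hv hw hvw hp zero (sbr_Iop_left hvw p 0) (sbr_Iop_right hvw p 0)
  refine induction_of_sbr_ne_zero (P := fun x => origamiPts U (x * y))
    (by simpa using zero) (by simpa using hy) ?_ hx
  intro v hv w hw hvw p q hp hq _ _
  rw [Iop_eq_add, add_mul]
  exact add hu h (project_mul hv hw hvw hp) (project_mul hw hv (sbr_swap_ne_zero hvw) hq)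

lemma one_sub_div_one_sub (hu : u ∈ U) (hu0 : u ≠ 0) (hw : w ∈ U) (h : sbr 1 w ≠ 0) :
    origamiPts U ((1 - u / conj u) / (1 - conj w / w)) := by
  have hu' : conj u ≠ 0 := by simpa using hu0
  have hw0 := left_ne_zero_of_sbr_ne_zero (sbr_swap_ne_zero h)
  have hw1 : conj w - w ≠ 0 := by simpa [sbr] using h
  have hw2 : w - conj w ≠ 0 := by rwa [← neg_sub, neg_ne_zero]
  have quotient_eq : (1 - u / conj u) / (1 - conj w / w) =
      (conj u - u) * w / (conj u * (w - conj w)) := by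
    field_simp
  have direction_ne : sbr u (u * w) ≠ 0 := by
    simpa only [mul_one] using sbr_mul_mul_ne_zero hu0 h
  rw [quotient_eq]
  refine of_sbr_eq hu (U.mul_mem hu hw) direction_ne one zero ?_ ?_ <;>
  · simp only [sbr, map_one, map_zero, map_div₀, map_mul, map_sub, Complex.conj_conj]
    field_simp
    ring

end origamiPts

/-- The ring `R(U)` of origami points for a multiplicatively closed set `U` of directions containing
`1`; the second condition provides three pairwise non-parallel directions `1`, `u`, `u ^ 2`. -/
def origamiRing (U : Submonoid ℂ) (hU : ∃ u ∈ U, sbr 1 (u ^ 2) ≠ 0) : Subring ℂ where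
  carrier := {x | origamiPts U x}
  zero_mem' := .zero
  one_mem' := .one
  add_mem' := hU.elim fun _ hu => .add hu.1 hu.2
  mul_mem' := hU.elim fun _ hu => .mul hu.1 hu.2
  neg_mem' := hU.elim fun _ hu => .neg hu.1 hu.2

section RootsOfUnity

variable {A : Type*} [CommRing A] [IsDomain A] {n : ℕ} {x y ζ : A}

lemma sub_dvd_geom_sum_of_pow_eq_one (hy : y ^ n = 1) (hy1 : y ≠ 1) :
    x - y ∣ ∑ i ∈ Finset.range n, x ^ i := by
  have geom_sum_eq_zero : ∑ i ∈ Finset.range n, y ^ i = 0 := by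
    have := mul_neg_geom_sum y n
    rw [hy, sub_self] at this
    exact (mul_eq_zero.1 this).resolve_left (sub_ne_zero.2 hy1.symm)
  rw [← sub_zero (∑ i ∈ Finset.range n, x ^ i), ← geom_sum_eq_zero, ← Finset.sum_sub_distrib]
  exact Finset.dvd_sum fun i _ => sub_dvd_pow_sub_pow x y i

lemma isUnit_sub_of_pow_eq_one (hn : IsUnit (n : A)) (hx : x ^ n = 1) (hy : y ^ n = 1)
    (hxy : x ≠ y) : IsUnit (x - y) := by
  have hn0 : n ≠ 0 := by
    rintro rfl
    simp at hn
  have hxu : IsUnit x := .of_pow_eq_one hx hn0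
  obtain ⟨c, rfl⟩ := hxu.dvd (a := y)
  have hc : c ^ n = 1 := by rwa [mul_pow, hx, one_mul] at hy
  have hc1 : c ≠ 1 := by
    rintro rfl
    exact hxy (mul_one x).symm
  have dvd_natCast : 1 - c ∣ (n : A) := by
    simpa using sub_dvd_geom_sum_of_pow_eq_one (x := 1) hc hc1
  rw [← mul_one_sub]
  exact hxu.mul (isUnit_of_dvd_unit dvd_natCast hn)

lemma isUnit_one_sub_of_not_prime (hζ : IsPrimitiveRoot ζ n) (hn : 2 ≤ n) (hnp : ¬ n.Prime)
    (hdvd : ∀ i, ζ ^ i ≠ 1 → 1 - ζ ^ i ∣ 1 - ζ) : IsUnit (1 - ζ) := by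
  obtain ⟨m, ⟨k, rfl⟩, hm, hmn⟩ := Nat.exists_dvd_of_not_prime2 hn hnp
  have hζ1 : 1 - ζ ≠ 0 := sub_ne_zero.2 (hζ.ne_one (by omega)).symm
  have hζm : ζ ^ m ≠ 1 := hζ.pow_ne_one_of_pos_of_lt (by omega) hmn
  have hζk : IsPrimitiveRoot (ζ ^ k) m := hζ.pow (by omega) (mul_comm m k)
  have isUnit_geom_sum : IsUnit (∑ i ∈ Finset.range m, ζ ^ i) := by
    rw [isUnit_iff_dvd_one, ← mul_dvd_mul_iff_left hζ1, mul_neg_geom_sum, mul_one]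
    exact hdvd m hζm
  have one_sub_dvd : 1 - ζ ∣ ζ - ζ ^ k := by
    simpa using dvd_sub (one_sub_dvd_one_sub_pow ζ k) (dvd_refl (1 - ζ))
  exact isUnit_of_dvd_unit (one_sub_dvd.trans
    (sub_dvd_geom_sum_of_pow_eq_one hζk.pow_eq_one (hζk.ne_one hm))) isUnit_geom_sum

lemma isUnit_natCast_of_not_prime (hζ : IsPrimitiveRoot ζ n) (hn : 2 ≤ n) (hnp : ¬ n.Prime)
    (hdvd : ∀ i, ζ ^ i ≠ 1 → 1 - ζ ^ i ∣ 1 - ζ) : IsUnit (n : A) := by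
  have hunit := isUnit_one_sub_of_not_prime hζ hn hnp hdvd
  obtain ⟨l, rfl⟩ := Nat.exists_eq_add_of_le' (show 1 ≤ n by omega)
  rw [Nat.cast_succ, ← hζ.prod_one_sub_pow_eq_order]
  refine IsUnit.prod_iff.2 fun i hi => isUnit_of_dvd_unit (hdvd (i + 1) ?_) hunit
  rw [Finset.mem_range] at hi
  exact hζ.pow_ne_one_of_pos_of_lt (by omega) (by omega)

end RootsOfUnity

section SubringOfField

variable {K : Type*} [Field K] {S : Subring K} {n : ℕ}

lemma inv_mem_of_isUnit {x : S} (hx : IsUnit x) : (x : K)⁻¹ ∈ S := by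
  obtain ⟨y, hxy⟩ := hx.exists_right_inv
  rw [← eq_inv_of_mul_eq_one_right (congrArg Subtype.val hxy)]
  exact y.2

lemma inv_sub_mem_of_pow_eq_one (hn0 : (n : K) ≠ 0) (hn : (n : K)⁻¹ ∈ S) {a b : K} (ha : a ∈ S)
    (hb : b ∈ S) (han : a ^ n = 1) (hbn : b ^ n = 1) : (a - b)⁻¹ ∈ S := by
  obtain rfl | hab := eq_or_ne a b
  · rw [sub_self, inv_zero]
    exact S.zero_mem
  have isUnit_n : IsUnit (n : S) :=
    .of_mul_eq_one ⟨(n : K)⁻¹, hn⟩ (Subtype.ext (by simpa using mul_inv_cancel₀ hn0))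
  exact inv_mem_of_isUnit (x := ⟨a, ha⟩ - ⟨b, hb⟩) <|
    isUnit_sub_of_pow_eq_one isUnit_n (Subtype.ext han) (Subtype.ext hbn)
      fun h => hab (congrArg Subtype.val h)

end SubringOfField

section RootDirections

variable {n : ℕ} {ζ u w : ℂ}

/-- The set `U_n` of directions: the `2n`-th roots of unity, as a submonoid of `ℂ`. -/
def rootDirections (n : ℕ) : Submonoid ℂ := MonoidHom.mker (powMonoidHom (2 * n))

lemma mem_rootDirections : u ∈ rootDirections n ↔ u ^ (2 * n) = 1 := Iff.rfl

lemma ne_zero_of_mem_rootDirections (hn : n ≠ 0) (hu : u ∈ rootDirections n) : u ≠ 0 :=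
  (IsUnit.of_pow_eq_one (mem_rootDirections.1 hu) (by omega)).ne_zero

lemma conj_eq_inv_of_pow_eq_one (hn : n ≠ 0) (hw : w ^ n = 1) : conj w = w⁻¹ :=
  (Complex.inv_eq_conj (Complex.norm_eq_one_of_pow_eq_one hw hn)).symm

lemma div_conj_eq_sq (hn : n ≠ 0) (hu : u ∈ rootDirections n) : u / conj u = u ^ 2 := by
  rw [conj_eq_inv_of_pow_eq_one (by omega) (mem_rootDirections.1 hu), div_inv_eq_mul, sq]

lemma sq_pow_eq_one (hu : u ∈ rootDirections n) : (u ^ 2) ^ n = 1 := by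
  rw [← pow_mul, mem_rootDirections.1 hu]

lemma exists_mem_rootDirections_sq_eq (hw : w ^ n = 1) : ∃ u ∈ rootDirections n, u ^ 2 = w := by
  obtain ⟨u, rfl⟩ := IsAlgClosed.exists_pow_nat_eq w two_pos
  exact ⟨u, mem_rootDirections.2 (by rwa [pow_mul]), rfl⟩

lemma sbr_one_ne_zero_of_pow_eq_one (hn : n ≠ 0) (hw : w ^ n = 1) (hw2 : w ^ 2 ≠ 1) :
    sbr 1 w ≠ 0 := by
  have hw0 : w ≠ 0 := (IsUnit.of_pow_eq_one hw hn).ne_zero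
  rw [sbr, conj_eq_inv_of_pow_eq_one hn hw, map_one, one_mul, one_mul, sub_ne_zero]
  intro h
  exact hw2 (by rw [sq, ← inv_mul_cancel₀ hw0, h])

lemma exists_mem_rootDirections_sbr_ne_zero (hn : 3 ≤ n) :
    ∃ u ∈ rootDirections n, sbr 1 (u ^ 2) ≠ 0 := by
  have hζ := Complex.isPrimitiveRoot_exp n (by omega)
  obtain ⟨u, hu, hu2⟩ := exists_mem_rootDirections_sq_eq hζ.pow_eq_one
  refine ⟨u, hu, sbr_one_ne_zero_of_pow_eq_one (by omega) (sq_pow_eq_one hu) ?_⟩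
  rw [hu2]
  exact hζ.pow_ne_one_of_pos_of_lt two_ne_zero (by omega)

/-- The ring `R(U_n)`, for `3 ≤ n`. -/
def rootOrigamiRing (n : ℕ) (hn : 3 ≤ n) : Subring ℂ :=
  origamiRing (rootDirections n) (exists_mem_rootDirections_sbr_ne_zero hn)

lemma primitiveRoot_mem_rootOrigamiRing (hn : 3 ≤ n) (hζ : IsPrimitiveRoot ζ n) :
    ζ ∈ rootOrigamiRing n hn := by
  obtain ⟨u, hu, rfl⟩ := exists_mem_rootDirections_sq_eq hζ.pow_eq_one
  have hu2 : sbr 1 (u ^ 2) ≠ 0 := sbr_one_ne_zero_of_pow_eq_one (by omega) hζ.pow_eq_one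
    (hζ.pow_ne_one_of_pos_of_lt two_ne_zero (by omega))
  rw [← div_conj_eq_sq (by omega) hu]
  exact .div_conj hu hu2

lemma one_sub_div_one_sub_mem_rootOrigamiRing (hn : 3 ≤ n) {b c : ℂ} (hb : b ^ n = 1)
    (hc : c ^ n = 1) (hc1 : c ≠ 1) : (1 - b) / (1 - c) ∈ rootOrigamiRing n hn := by
  have hn0 : n ≠ 0 := by omega
  obtain ⟨u, hu, rfl⟩ := exists_mem_rootDirections_sq_eq hb
  obtain ⟨w, hw, hwc⟩ := exists_mem_rootDirections_sq_eq (w := c⁻¹) (by rw [inv_pow, hc, inv_one])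
  obtain rfl : c = conj w / w := by
    rw [← inv_div, div_conj_eq_sq hn0 hw, hwc, inv_inv]
  rw [← div_conj_eq_sq hn0 hu]
  refine .one_sub_div_one_sub hu (ne_zero_of_mem_rootDirections hn0 hu) hw
    (sbr_one_ne_zero_of_pow_eq_one (by omega) (mem_rootDirections.1 hw) fun hw2 => hc1 ?_)
  rwa [hw2, eq_comm, inv_eq_one] at hwc

theorem inv_natCast_mem_rootOrigamiRing (hn : 3 ≤ n) (hnp : ¬ n.Prime) :
    (n : ℂ)⁻¹ ∈ rootOrigamiRing n hn := by
  have hζ := Complex.isPrimitiveRoot_exp n (by omega)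
  set ζ : ℂ := Complex.exp (2 * Real.pi * Complex.I / n)
  let ξ : rootOrigamiRing n hn := ⟨ζ, primitiveRoot_mem_rootOrigamiRing hn hζ⟩
  have hξ : IsPrimitiveRoot ξ n :=
    .of_map_of_injective (f := (rootOrigamiRing n hn).subtype) hζ Subtype.val_injective
  refine inv_mem_of_isUnit (x := n) (isUnit_natCast_of_not_prime hξ (by omega) hnp fun i hi => ?_)
  have hi' : ζ ^ i ≠ 1 := fun h => hi (Subtype.ext h)
  refine ⟨⟨_, one_sub_div_one_sub_mem_rootOrigamiRing hn hζ.pow_eq_one ?_ hi'⟩, Subtype.ext ?_⟩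
  · rw [pow_right_comm, hζ.pow_eq_one, one_pow]
  · exact (mul_div_cancel₀ _ (sub_ne_zero.2 hi'.symm)).symm

lemma conj_mem_closure_of_pow_eq_one (hn : n ≠ 0) (hw : w ^ n = 1) {x : ℂ}
    (hx : x ∈ Subring.closure {w, (n : ℂ)⁻¹}) : conj x ∈ Subring.closure {w, (n : ℂ)⁻¹} := by
  set S := Subring.closure {w, (n : ℂ)⁻¹}
  suffices S ≤ S.comap (starRingEnd ℂ) from this hx
  rw [Subring.closure_le, Set.insert_subset_iff, Set.singleton_subset_iff]
  constructor <;> rw [SetLike.mem_coe, Subring.mem_comap]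
  · have pow_pred_mul : w ^ (n - 1) * w = 1 := by rw [pow_sub_one_mul hn, hw]
    rw [conj_eq_inv_of_pow_eq_one hn hw, ← eq_inv_of_mul_eq_one_left pow_pred_mul]
    exact S.pow_mem (Subring.subset_closure (Set.mem_insert _ _)) _
  · rw [map_inv₀, map_natCast]
    exact Subring.subset_closure (Set.mem_insert_of_mem _ rfl)

theorem mem_closure_of_origamiPts (hn : n ≠ 0) (hζ : IsPrimitiveRoot ζ n) {x : ℂ}
    (hx : origamiPts (rootDirections n) x) : x ∈ Subring.closure {ζ, (n : ℂ)⁻¹} := by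
  have conj_mem (y) := conj_mem_closure_of_pow_eq_one hn hζ.pow_eq_one (x := y)
  have ζ_mem : ζ ∈ Subring.closure {ζ, (n : ℂ)⁻¹} := Subring.subset_closure (by simp)
  have inv_mem : (n : ℂ)⁻¹ ∈ Subring.closure {ζ, (n : ℂ)⁻¹} := Subring.subset_closure (by simp)
  generalize Subring.closure {ζ, (n : ℂ)⁻¹} = S at *
  have sq_mem {u : ℂ} (hu : u ∈ rootDirections n) : u ^ 2 ∈ S := by
    have : NeZero n := ⟨hn⟩
    obtain ⟨i, -, hi⟩ := hζ.eq_pow_of_pow_eq_one (sq_pow_eq_one hu)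
    exact hi ▸ S.pow_mem ζ_mem i
  refine origamiPts.mem_subring conj_mem (fun u hu => ?_) (fun u hu v hv => ?_) hx
  · rw [div_conj_eq_sq hn hu]
    exact sq_mem hu
  · rw [div_conj_eq_sq hn hu, div_conj_eq_sq hn hv]
    exact inv_sub_mem_of_pow_eq_one (Nat.cast_ne_zero.2 hn) inv_mem (sq_mem hu) (sq_mem hv)
      (sq_pow_eq_one hu) (sq_pow_eq_one hv)

end RootDirections

/-- For a composite `n ≥ 4`, `R(U_n) = ℤ[1/n, ζ_n]`, the subring of `ℂ` generated by
`ζ_n = exp(2πi/n)` and `1/n`.  Here `U_n` is the group of `2n`-th roots of unity in `ℂ`. -/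
theorem stmt_18 (n : ℕ) (hn : 4 ≤ n) (hnp : ¬ n.Prime) :
    {z : ℂ | origamiPts {w : ℂ | w ^ (2 * n) = 1} z} =
      (Subring.closure {Complex.exp (2 * Real.pi * Complex.I / n), ((n : ℂ))⁻¹} : Set ℂ) := by
  have hζ := Complex.isPrimitiveRoot_exp n (by omega)
  have hn3 : 3 ≤ n := by omega
  refine Set.Subset.antisymm (fun x hx => mem_closure_of_origamiPts (by omega) hζ hx) ?_
  suffices Subring.closure {Complex.exp (2 * Real.pi * Complex.I / n), ((n : ℂ))⁻¹} ≤
      rootOrigamiRing n hn3 from this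
  rw [Subring.closure_le]
  rintro _ (rfl | rfl)
  · exact primitiveRoot_mem_rootOrigamiRing hn3 hζ
  · exact inv_natCast_mem_rootOrigamiRing hn3 hnp
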